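/- arXiv:2108.09173 — 6 statements merged into one kernel-verified Lean document; each statement's English description precedes it below -/
import Mathlib

section
/- Let E be a real Hilbert space, p, n ∈ ℕ, and for each ι ∈ Fin p let f^ι : E → ℝ be differentiable with gradient ∇f^ι. Let γ₀ ≥ 0 and γ : Fin p → ℝ be nonnegative with γ₀ + Σ_ι γ ι = 1, let W : Fin n → Fin n → ℝ be doubly stochastic, let α ≥ 0, v : Fin n → E, ε : Fin n → Fin p → E, and x* ∈ E. Define the SRDO update x j := γ₀ • v j + Σ_ι γ ι • (v j − α • (∇f^ι (v j) − ε j ι)) and the consensus step v' l := Σ_j W l j • x j. Then Σ_l ‖v' l − x*‖² ≤ Σ_j ‖v j − x*‖² + 2α Σ_j Σ_ι γ ι ⟨∇f^ι(v j), x* − v j⟩ + 2α Σ_j Σ_ι γ ι ⟨ε j ι, v j − x*⟩ + 2(1−γ₀) α² Σ_j Σ_ι γ ι (‖∇f^ι(v j)‖² + ‖ε j ι‖²). -/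
open RealInnerProductSpace

theorem srdo_aux_jensen {E : Type*} [NormedAddCommGroup E] [InnerProductSpace ℝ E]
    {n : ℕ} (w : Fin n → ℝ) (hw : ∀ i, 0 ≤ w i) (y : Fin n → E) :
    ‖∑ i, w i • y i‖ ^ 2 ≤ (∑ i, w i) * ∑ i, w i * ‖y i‖ ^ 2 := by
  have h1 : ‖∑ i, w i • y i‖ ≤ ∑ i, w i * ‖y i‖ := by
    refine (norm_sum_le _ _).trans (le_of_eq (Finset.sum_congr rfl fun i _ => ?_))
    rw [norm_smul, Real.norm_of_nonneg (hw i)]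
  refine (pow_le_pow_left₀ (norm_nonneg _) h1 2).trans ?_
  exact Finset.sum_sq_le_sum_mul_sum_of_sq_eq_mul _ (fun i _ => hw i)
    (fun i _ => mul_nonneg (hw i) (sq_nonneg _)) (fun i _ => by ring)

/-- SRDO basic per-iteration error bound (Lemma `general_error_bound`, deterministic form).
One SRDO iteration: gradient step with decoding errors followed by a consensus step with a
doubly stochastic matrix. -/
theorem srdo_general_error_bound
    {E : Type*} [NormedAddCommGroup E] [InnerProductSpace ℝ E] [CompleteSpace E]
    (p n : ℕ) (f : Fin p → E → ℝ) (gf : Fin p → E → E)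
    (hf : ∀ ι x, HasGradientAt (f ι) (gf ι x) x)
    (γ₀ : ℝ) (γ : Fin p → ℝ) (hγ₀ : 0 ≤ γ₀) (hγ : ∀ ι, 0 ≤ γ ι)
    (hγsum : γ₀ + ∑ ι, γ ι = 1)
    (W : Fin n → Fin n → ℝ) (hW : ∀ i j, 0 ≤ W i j)
    (hWrow : ∀ i, ∑ j, W i j = 1) (hWcol : ∀ j, ∑ i, W i j = 1)
    (α : ℝ) (hα : 0 ≤ α) (v : Fin n → E) (ε : Fin n → Fin p → E) (xstar : E)
    (x : Fin n → E)
    (hx : ∀ j, x j = γ₀ • v j + ∑ ι, γ ι • (v j - α • (gf ι (v j) - ε j ι)))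
    (v' : Fin n → E) (hv' : ∀ l, v' l = ∑ j, W l j • x j) :
    ∑ l, ‖v' l - xstar‖ ^ 2 ≤
      ∑ j, ‖v j - xstar‖ ^ 2
      + 2 * α * (∑ j, ∑ ι, γ ι * ⟪gf ι (v j), xstar - v j⟫)
      + 2 * α * (∑ j, ∑ ι, γ ι * ⟪ε j ι, v j - xstar⟫)
      + 2 * (1 - γ₀) * α ^ 2 * (∑ j, ∑ ι, γ ι * (‖gf ι (v j)‖ ^ 2 + ‖ε j ι‖ ^ 2)) := by
  have hγ1 : ∑ ι, γ ι = 1 - γ₀ := by linarith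
  have hcons : ∑ l, ‖v' l - xstar‖ ^ 2 ≤ ∑ j, ‖x j - xstar‖ ^ 2 := by
    have h1 : ∀ l, ‖v' l - xstar‖ ^ 2 ≤ ∑ j, W l j * ‖x j - xstar‖ ^ 2 := by
      intro l
      have h := srdo_aux_jensen (W l) (hW l) (fun j => x j - xstar)
      have e : ∑ j, W l j • (x j - xstar) = v' l - xstar := by
        simp only [smul_sub, Finset.sum_sub_distrib]
        rw [← Finset.sum_smul, hWrow, one_smul, hv']
      rwa [e, hWrow, one_mul] at h
    refine (Finset.sum_le_sum fun l _ => h1 l).trans (le_of_eq ?_)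
    rw [Finset.sum_comm]
    refine Finset.sum_congr rfl fun j _ => ?_
    rw [← Finset.sum_mul, hWcol, one_mul]
  refine hcons.trans ?_
  simp only [Finset.mul_sum (s := (Finset.univ : Finset (Fin n)))]
  rw [← Finset.sum_add_distrib, ← Finset.sum_add_distrib, ← Finset.sum_add_distrib]
  refine Finset.sum_le_sum fun j _ => ?_
  have e : x j - xstar = (v j - xstar) - α • ∑ ι, γ ι • (gf ι (v j) - ε j ι) := by
    have e1 : ∑ ι, γ ι • (v j - α • (gf ι (v j) - ε j ι))
        = (1 - γ₀) • v j - α • ∑ ι, γ ι • (gf ι (v j) - ε j ι) := by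
      rw [← hγ1, Finset.sum_smul, Finset.smul_sum, ← Finset.sum_sub_distrib]
      refine Finset.sum_congr rfl fun ι _ => ?_
      rw [smul_sub, smul_comm α]
    rw [hx, e1]
    module
  have hin : ⟪v j - xstar, ∑ ι, γ ι • (gf ι (v j) - ε j ι)⟫
      = -(∑ ι, γ ι * ⟪gf ι (v j), xstar - v j⟫) - ∑ ι, γ ι * ⟪ε j ι, v j - xstar⟫ := by
    rw [inner_sum, ← Finset.sum_neg_distrib, ← Finset.sum_sub_distrib]
    refine Finset.sum_congr rfl fun ι _ => ?_
    rw [inner_smul_right, real_inner_comm, inner_sub_left, ← neg_sub (v j) xstar, inner_neg_right]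
    ring
  have hJ := srdo_aux_jensen γ hγ (fun ι => gf ι (v j) - ε j ι)
  have hS : ∑ ι, γ ι * ‖gf ι (v j) - ε j ι‖ ^ 2
      ≤ 2 * ∑ ι, γ ι * (‖gf ι (v j)‖ ^ 2 + ‖ε j ι‖ ^ 2) := by
    rw [Finset.mul_sum]
    refine Finset.sum_le_sum fun ι _ => ?_
    have := parallelogram_law_with_norm ℝ (gf ι (v j)) (ε j ι)
    have h2 : ‖gf ι (v j) - ε j ι‖ ^ 2 ≤ 2 * (‖gf ι (v j)‖ ^ 2 + ‖ε j ι‖ ^ 2) := by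
      nlinarith [sq_nonneg ‖gf ι (v j) + ε j ι‖]
    nlinarith [mul_le_mul_of_nonneg_left h2 (hγ ι)]
  have h0 : 0 ≤ 1 - γ₀ := hγ1 ▸ Finset.sum_nonneg fun ι _ => hγ ι
  rw [hγ1] at hJ
  have hK := mul_le_mul_of_nonneg_left (hJ.trans (mul_le_mul_of_nonneg_left hS h0)) (sq_nonneg α)
  rw [e, norm_sub_sq_real, inner_smul_right, hin, norm_smul, mul_pow, Real.norm_eq_abs, sq_abs]
  linarith
end

section
/- Let E be a real Hilbert space, p, n ∈ ℕ, and for each ι ∈ Fin p let f^ι : E → ℝ be differentiable with gradient ∇f^ι. Let γ₀ ≥ 0 and γ : Fin p → ℝ be nonnegative with γ₀ + Σ_ι γ ι = 1, let W : Fin n → Fin n → ℝ be doubly stochastic, let α ≥ 0, v : Fin n → E, ε : Fin n → Fin p → E. Suppose x* ∈ E satisfies ∇f^ι(x*) = 0 for every ι. Define x j := γ₀ • v j + Σ_ι γ ι • (v j − α • (∇f^ι (v j) − ε j ι)) and v' l := Σ_j W l j • x j. Then Σ_l ‖v' l − x*‖² ≤ Σ_j ‖v j − x*‖² + 2α Σ_j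 Σ_ι γ ι ⟨ε j ι, v j − x*⟩ + 2(1−γ₀) α² Σ_j Σ_ι γ ι ‖ε j ι‖² − 2α Σ_j Σ_ι γ ι (⟨∇f^ι(v j), v j − x*⟩ − (1−γ₀) α ‖∇f^ι(v j)‖²). -/
open RealInnerProductSpace

theorem wsum_sq {E : Type*} [NormedAddCommGroup E] [InnerProductSpace ℝ E]
    {m : ℕ} (w : Fin m → ℝ) (hw : ∀ i, 0 ≤ w i) (z : Fin m → E) :
    ‖∑ i, w i • z i‖ ^ 2 ≤ (∑ i, w i) * ∑ i, w i * ‖z i‖ ^ 2 := by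
  have h1 : ‖∑ i, w i • z i‖ ≤ ∑ i, w i * ‖z i‖ := by
    refine (norm_sum_le _ _).trans (Finset.sum_le_sum fun i _ => ?_)
    rw [norm_smul, Real.norm_of_nonneg (hw i)]
  have h2 : (∑ i, w i * ‖z i‖) ^ 2 ≤ (∑ i, w i) * ∑ i, w i * ‖z i‖ ^ 2 :=
    Finset.sum_sq_le_sum_mul_sum_of_sq_le_mul _ (fun i _ => hw i)
      (fun i _ => mul_nonneg (hw i) (sq_nonneg _)) (fun i _ => le_of_eq (by ring))
  exact (pow_le_pow_left₀ (norm_nonneg _) h1 2).trans h2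

/-- SRDO per-iteration error bound when the global optimizer `x*` is a critical point of every
partition function (Lemma `type1_error_bound`, deterministic form). -/
theorem srdo_type1_error_bound
    {E : Type*} [NormedAddCommGroup E] [InnerProductSpace ℝ E] [CompleteSpace E]
    (p n : ℕ) (f : Fin p → E → ℝ) (gf : Fin p → E → E)
    (hf : ∀ ι x, HasGradientAt (f ι) (gf ι x) x)
    (γ₀ : ℝ) (γ : Fin p → ℝ) (hγ₀ : 0 ≤ γ₀) (hγ : ∀ ι, 0 ≤ γ ι)
    (hγsum : γ₀ + ∑ ι, γ ι = 1)
    (W : Fin n → Fin n → ℝ) (hW : ∀ i j, 0 ≤ W i j)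
    (hWrow : ∀ i, ∑ j, W i j = 1) (hWcol : ∀ j, ∑ i, W i j = 1)
    (α : ℝ) (hα : 0 ≤ α) (v : Fin n → E) (ε : Fin n → Fin p → E)
    (xstar : E) (hxstar : ∀ ι, gf ι xstar = 0)
    (x : Fin n → E)
    (hx : ∀ j, x j = γ₀ • v j + ∑ ι, γ ι • (v j - α • (gf ι (v j) - ε j ι)))
    (v' : Fin n → E) (hv' : ∀ l, v' l = ∑ j, W l j • x j) :
    ∑ l, ‖v' l - xstar‖ ^ 2 ≤
      ∑ j, ‖v j - xstar‖ ^ 2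
      + 2 * α * (∑ j, ∑ ι, γ ι * ⟪ε j ι, v j - xstar⟫)
      + 2 * (1 - γ₀) * α ^ 2 * (∑ j, ∑ ι, γ ι * ‖ε j ι‖ ^ 2)
      - 2 * α * (∑ j, ∑ ι, γ ι *
          (⟪gf ι (v j), v j - xstar⟫ - (1 - γ₀) * α * ‖gf ι (v j)‖ ^ 2)) := by
  have hcons : ∑ l, ‖v' l - xstar‖ ^ 2 ≤ ∑ j, ‖x j - xstar‖ ^ 2 := by
    have h1 : ∀ l, ‖v' l - xstar‖ ^ 2 ≤ ∑ j, W l j * ‖x j - xstar‖ ^ 2 := by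
      intro l
      have h := wsum_sq (W l) (hW l) (fun j => x j - xstar)
      rw [hWrow l, one_mul] at h
      have e : v' l - xstar = ∑ j, W l j • (x j - xstar) := by
        simp only [smul_sub, Finset.sum_sub_distrib, ← Finset.sum_smul, hWrow l, one_smul, hv' l]
      rw [e]; exact h
    refine (Finset.sum_le_sum fun l _ => h1 l).trans ?_
    rw [Finset.sum_comm]
    simp only [← Finset.sum_mul, hWcol, one_mul, le_refl]
  refine hcons.trans ?_
  simp only [Finset.mul_sum, ← Finset.sum_add_distrib, ← Finset.sum_sub_distrib]
  refine Finset.sum_le_sum fun j _ => ?_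
  have hS : ∑ ι, γ ι = 1 - γ₀ := by linarith
  have hS0 : 0 ≤ 1 - γ₀ := hS ▸ Finset.sum_nonneg fun i _ => hγ i
  have e : x j - xstar = (v j - xstar) - α • ∑ ι, γ ι • (gf ι (v j) - ε j ι) := by
    have : ∑ ι, γ ι • (v j - α • (gf ι (v j) - ε j ι))
        = (1 - γ₀) • v j - α • ∑ ι, γ ι • (gf ι (v j) - ε j ι) := by
      rw [← hS, Finset.sum_smul, Finset.smul_sum, ← Finset.sum_sub_distrib]
      refine Finset.sum_congr rfl fun ι _ => ?_
      rw [smul_sub, smul_comm]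
    rw [hx j, this, sub_smul, one_smul]
    abel
  have hd := wsum_sq γ hγ (fun ι => gf ι (v j) - ε j ι)
  rw [hS] at hd
  have hd2 : ∑ ι, γ ι * ‖gf ι (v j) - ε j ι‖ ^ 2
      ≤ ∑ ι, γ ι * (2 * ‖gf ι (v j)‖ ^ 2 + 2 * ‖ε j ι‖ ^ 2) := by
    refine Finset.sum_le_sum fun ι _ => mul_le_mul_of_nonneg_left ?_ (hγ ι)
    have := parallelogram_law_with_norm ℝ (gf ι (v j)) (ε j ι)
    nlinarith [mul_self_nonneg ‖gf ι (v j) + ε j ι‖]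
  have hd3 := mul_le_mul_of_nonneg_left
    (hd.trans (mul_le_mul_of_nonneg_left hd2 hS0)) (sq_nonneg α)
  have hin : ⟪v j - xstar, ∑ ι, γ ι • (gf ι (v j) - ε j ι)⟫
      = ∑ ι, γ ι * (⟪gf ι (v j), v j - xstar⟫ - ⟪ε j ι, v j - xstar⟫) := by
    rw [real_inner_comm, sum_inner]
    refine Finset.sum_congr rfl fun ι _ => ?_
    rw [real_inner_smul_left, inner_sub_left]
  rw [e, norm_sub_sq_real, real_inner_smul_right, hin, norm_smul, mul_pow, Real.norm_eq_abs,
    sq_abs]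
  refine (add_le_add_right hd3 _).trans (le_of_eq ?_)
  rw [add_sub_assoc, add_assoc, sub_add, sub_eq_add_neg]
  congr 1
  simp only [Finset.mul_sum, ← Finset.sum_add_distrib, ← Finset.sum_sub_distrib,
    ← Finset.sum_neg_distrib]
  refine Finset.sum_congr rfl fun ι _ => ?_
  ring
end

section
/- Let E be a real Hilbert space, p, n, H ∈ ℕ, σ > 0, L ≥ 0, c ≥ 0. For each ι ∈ Fin p let f^ι : E → ℝ be σ-strongly convex and differentiable with L-Lipschitz gradient ∇f^ι, and let x* ∈ E satisfy ∇f^ι(x*) = 0 for every ι. Let γ₀ ≥ 0 and γ : Fin p → ℝ be nonnegative with γ₀ + Σ_ι γ ι = 1, let W : ℕ → Fin n → Fin n → ℝ be doubly stochastic for every index, α : ℕ → ℝ nonnegative, and let v : ℕ → Fin n → E satisfy the SRDO recursion v (k+1) l = Σ_j W (k+1) l j • (γ₀ • v k j + Σ_ι γ ι • (v k j − α k • (∇f^ι (v k j) − ε k j ι))), where the errors satisfy ‖ε k j ι‖ ≤ 2 L c M k with M k := max over k̂ with max(k−H,0) ≤ k̂ ≤ k and q ∈ Fin n of ‖v k̂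 q − x*‖. Set V k := Σ_i ‖v k i − x*‖². Then for every k: V (k+1) ≤ (1 − 2(1−γ₀) σ (α k) + 2(1−γ₀)² L² (α k)²) · V k + 4(1−γ₀) n L c (α k) · max_{max(k−H,0) ≤ k̂ ≤ k} V k̂ + 8(1−γ₀)² n L² c² (α k)² · max_{max(k−H,0) ≤ k̂ ≤ k} V k̂. -/
open RealInnerProductSpace

/-- A function is `σ`-strongly convex if subtracting `σ/2 ‖·‖²` leaves it convex. -/
def StronglyConvexOnUniv {E : Type*} [NormedAddCommGroup E] [InnerProductSpace ℝ E]
    (σ : ℝ) (f : E → ℝ) : Prop :=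
  ConvexOn ℝ Set.univ (fun y => f y - σ / 2 * ‖y‖ ^ 2)

/-- The maximum of `‖v k̂ q − x*‖` over the delay window `max(k−H,0) ≤ k̂ ≤ k` and `q ∈ Fin n`. -/
noncomputable def delayWindowMax {E : Type*} [NormedAddCommGroup E]
    {n : ℕ} (hn : 0 < n) (H : ℕ) (v : ℕ → Fin n → E) (xstar : E) (k : ℕ) : ℝ :=
  (Finset.Icc (k - H) k).sup' (Finset.nonempty_Icc.mpr (Nat.sub_le k H)) fun k' =>
    Finset.univ.sup' (Finset.univ_nonempty_iff.mpr (Fin.pos_iff_nonempty.mp hn)) fun q =>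
      ‖v k' q - xstar‖

/-- The maximum of a real sequence over the delay window `max(k−H,0) ≤ k̂ ≤ k`. -/
noncomputable def windowMax (H : ℕ) (V : ℕ → ℝ) (k : ℕ) : ℝ :=
  (Finset.Icc (k - H) k).sup' (Finset.nonempty_Icc.mpr (Nat.sub_le k H)) V

theorem srdo_strong_mono {E : Type*} [NormedAddCommGroup E] [InnerProductSpace ℝ E] [CompleteSpace E]
    (σ : ℝ) (f : E → ℝ) (gf : E → E) (hconv : StronglyConvexOnUniv σ f)
    (hf : ∀ x, HasGradientAt f (gf x) x) (x u : E) (hx : gf x = 0) :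
    σ * ‖u - x‖ ^ 2 ≤ ⟪gf u, u - x⟫ := by
  set d := u - x with hd
  let φ : ℝ → ℝ := fun t => f (x + t • d) - σ / 2 * ‖x + t • d‖ ^ 2
  have hφ : ConvexOn ℝ Set.univ φ := by
    have h := hconv.comp_affineMap (AffineMap.lineMap x u)
    rw [Set.preimage_univ] at h
    have hEq : φ = (fun y => f y - σ / 2 * ‖y‖ ^ 2) ∘ (AffineMap.lineMap x u : ℝ →ᵃ[ℝ] E) := by
      funext t
      simp [φ, AffineMap.lineMap_apply, hd, add_comm]
    rw [hEq]
    exact h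
  have hline : ∀ t : ℝ, HasDerivAt (fun t : ℝ => x + t • d) d t := by
    intro t
    simpa using ((hasDerivAt_id t).smul_const d).const_add x
  have hder : ∀ t, HasDerivAt φ (⟪gf (x + t • d), d⟫ - σ / 2 * (2 * ⟪x + t • d, d⟫)) t := by
    intro t
    have h1 : HasDerivAt (fun t : ℝ => f (x + t • d)) ⟪gf (x + t • d), d⟫ t := by
      have := (hf (x + t • d)).hasFDerivAt.comp_hasDerivAt t (hline t)
      rw [InnerProductSpace.toDual_apply_apply] at this
      exact this
    exact h1.sub ((hline t).norm_sq.const_mul _)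
  have a := hφ.le_slope_of_hasDerivAt (Set.mem_univ 0) (Set.mem_univ 1) one_pos (hder 0)
  have b := hφ.slope_le_of_hasDerivAt (Set.mem_univ 0) (Set.mem_univ 1) one_pos (hder 1)
  have ab := a.trans b
  have hu : x + d = u := by simp [hd]
  simp only [zero_smul, add_zero, one_smul, hx, inner_zero_left] at ab
  rw [inner_add_left, real_inner_self_eq_norm_sq, hu] at ab
  linarith

theorem srdo_jensen {E : Type*} [NormedAddCommGroup E] [InnerProductSpace ℝ E] {n : ℕ}
    (w : Fin n → ℝ) (hw : ∀ j, 0 ≤ w j) (hs : ∑ j, w j = 1) (z : Fin n → E) :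
    ‖∑ j, w j • z j‖ ^ 2 ≤ ∑ j, w j * ‖z j‖ ^ 2 := by
  have h : ConvexOn ℝ Set.univ (fun y : E => ‖y‖ ^ 2) :=
    (convexOn_norm convex_univ).pow (fun _ _ => norm_nonneg _) 2
  simpa using h.map_sum_le (t := Finset.univ) (w := w) (p := z) (fun j _ => hw j) hs
    (fun _ _ => Set.mem_univ _)

theorem srdo_local {E : Type*} [NormedAddCommGroup E] [InnerProductSpace ℝ E]
    (y G e : E) (s σ L c a M : ℝ) (hs : 0 ≤ s) (hL : 0 ≤ L) (hc : 0 ≤ c) (ha : 0 ≤ a)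
    (hG : ‖G‖ ≤ s * (L * ‖y‖)) (he : ‖e‖ ≤ s * (2 * L * c * M))
    (hm : s * (σ * ‖y‖ ^ 2) ≤ ⟪G, y⟫) (hy : ‖y‖ ≤ M) :
    ‖y - a • (G - e)‖ ^ 2 ≤ (1 - 2 * s * σ * a + 2 * s ^ 2 * L ^ 2 * a ^ 2) * ‖y‖ ^ 2
      + 4 * s * L * c * a * M ^ 2 + 8 * s ^ 2 * L ^ 2 * c ^ 2 * a ^ 2 * M ^ 2 := by
  have hM : 0 ≤ M := (norm_nonneg y).trans hy
  have e1 : ‖y - a • (G - e)‖ ^ 2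
      = ‖y‖ ^ 2 - 2 * a * ⟪G, y⟫ + 2 * a * ⟪y, e⟫ + a ^ 2 * ‖G - e‖ ^ 2 := by
    rw [norm_sub_sq_real, inner_smul_right, inner_sub_right, norm_smul, mul_pow, Real.norm_eq_abs,
      sq_abs, real_inner_comm G y]
    ring
  have h1 : ⟪y, e⟫ ≤ M * (s * (2 * L * c * M)) :=
    (real_inner_le_norm y e).trans (mul_le_mul hy he (norm_nonneg _) hM)
  have h2 : ‖G - e‖ ^ 2 ≤ 2 * ‖G‖ ^ 2 + 2 * ‖e‖ ^ 2 := by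
    have := norm_sub_le G e
    nlinarith [sq_nonneg (‖G‖ - ‖e‖), norm_nonneg (G - e), norm_nonneg G, norm_nonneg e]
  have h3 : ‖G‖ ^ 2 ≤ (s * (L * ‖y‖)) ^ 2 := by gcongr
  have h4 : ‖e‖ ^ 2 ≤ (s * (2 * L * c * M)) ^ 2 := by gcongr
  have h5 : ‖G - e‖ ^ 2 ≤ 2 * (s * (L * ‖y‖)) ^ 2 + 2 * (s * (2 * L * c * M)) ^ 2 := by linarith
  have k1 := mul_le_mul_of_nonneg_left hm ha
  have k2 := mul_le_mul_of_nonneg_left h1 ha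
  have k3 := mul_le_mul_of_nonneg_left h5 (sq_nonneg a)
  rw [e1]
  linarith

/-- SRDO one-step contraction estimate for strongly convex partition functions whose common
critical point is the optimizer, with uniformly delay-bounded decoding errors. -/
theorem srdo_strongly_convex_recursion
    {E : Type*} [NormedAddCommGroup E] [InnerProductSpace ℝ E] [CompleteSpace E]
    (p n H : ℕ) (hn : 0 < n) (σ L c : ℝ) (hσ : 0 < σ) (hL : 0 ≤ L) (hc : 0 ≤ c)
    (f : Fin p → E → ℝ) (gf : Fin p → E → E)
    (hconv : ∀ ι, StronglyConvexOnUniv σ (f ι))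
    (hf : ∀ ι x, HasGradientAt (f ι) (gf ι x) x)
    (hlip : ∀ ι u w, ‖gf ι u - gf ι w‖ ≤ L * ‖u - w‖)
    (xstar : E) (hxstar : ∀ ι, gf ι xstar = 0)
    (γ₀ : ℝ) (γ : Fin p → ℝ) (hγ₀ : 0 ≤ γ₀) (hγ : ∀ ι, 0 ≤ γ ι)
    (hγsum : γ₀ + ∑ ι, γ ι = 1)
    (W : ℕ → Fin n → Fin n → ℝ) (hW : ∀ k i j, 0 ≤ W k i j)
    (hWrow : ∀ k i, ∑ j, W k i j = 1) (hWcol : ∀ k j, ∑ i, W k i j = 1)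
    (α : ℕ → ℝ) (hα : ∀ k, 0 ≤ α k)
    (v : ℕ → Fin n → E) (ε : ℕ → Fin n → Fin p → E)
    (hrec : ∀ k l, v (k + 1) l = ∑ j, W (k + 1) l j •
      (γ₀ • v k j + ∑ ι, γ ι • (v k j - α k • (gf ι (v k j) - ε k j ι))))
    (hε : ∀ k j ι, ‖ε k j ι‖ ≤ 2 * L * c * delayWindowMax hn H v xstar k) :
    ∀ k,
      (∑ i, ‖v (k + 1) i - xstar‖ ^ 2) ≤
        (1 - 2 * (1 - γ₀) * σ * α k + 2 * (1 - γ₀) ^ 2 * L ^ 2 * (α k) ^ 2) *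
          (∑ i, ‖v k i - xstar‖ ^ 2)
        + 4 * (1 - γ₀) * n * L * c * α k *
            windowMax H (fun k' => ∑ i, ‖v k' i - xstar‖ ^ 2) k
        + 8 * (1 - γ₀) ^ 2 * n * L ^ 2 * c ^ 2 * (α k) ^ 2 *
            windowMax H (fun k' => ∑ i, ‖v k' i - xstar‖ ^ 2) k := by
  intro k
  set M := delayWindowMax hn H v xstar k with hMdef
  set X := windowMax H (fun k' => ∑ i, ‖v k' i - xstar‖ ^ 2) k with hX
  set s := 1 - γ₀ with hsdef
  have hsum : ∑ ι, γ ι = s := by linarith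
  have hs : 0 ≤ s := hsum ▸ Finset.sum_nonneg (fun i _ => hγ i)
  have hyM : ∀ j, ‖v k j - xstar‖ ≤ M := by
    intro j
    rw [hMdef]
    unfold delayWindowMax
    refine Finset.le_sup'_of_le _ (b := k) (Finset.mem_Icc.mpr ⟨Nat.sub_le k H, le_rfl⟩) ?_
    exact Finset.le_sup' (fun q => ‖v k q - xstar‖) (Finset.mem_univ j)
  have hMX : M ^ 2 ≤ X := by
    obtain ⟨k', hk', h1⟩ := Finset.exists_mem_eq_sup' (Finset.nonempty_Icc.mpr (Nat.sub_le k H))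
      (fun k' => Finset.univ.sup'
        (Finset.univ_nonempty_iff.mpr (Fin.pos_iff_nonempty.mp hn)) fun q => ‖v k' q - xstar‖)
    obtain ⟨q, hq, h2⟩ := Finset.exists_mem_eq_sup'
      (Finset.univ_nonempty_iff.mpr (Fin.pos_iff_nonempty.mp hn)) (fun q => ‖v k' q - xstar‖)
    have h3 : M = ‖v k' q - xstar‖ := h1.trans h2
    rw [h3, hX]
    unfold windowMax
    refine Finset.le_sup'_of_le _ hk' ?_
    exact Finset.single_le_sum (f := fun i => ‖v k' i - xstar‖ ^ 2)
      (fun i _ => sq_nonneg _) (Finset.mem_univ q)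
  let G : Fin n → E := fun j => ∑ ι, γ ι • gf ι (v k j)
  let e : Fin n → E := fun j => ∑ ι, γ ι • ε k j ι
  let z : Fin n → E := fun j => (v k j - xstar) - α k • (G j - e j)
  have hz : ∀ l, v (k + 1) l - xstar = ∑ j, W (k + 1) l j • z j := by
    intro l
    have hx : xstar = ∑ j, W (k + 1) l j • xstar := by
      rw [← Finset.sum_smul, hWrow, one_smul]
    conv_lhs => rw [hrec, hx]
    rw [← Finset.sum_sub_distrib]
    refine Finset.sum_congr rfl fun j _ => ?_
    rw [← smul_sub]
    congr 1
    have : ∑ ι, γ ι • (v k j - α k • (gf ι (v k j) - ε k j ι))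
        = s • v k j - α k • (G j - e j) := by
      simp only [G, e]
      rw [← hsum, Finset.sum_smul, ← Finset.sum_sub_distrib, Finset.smul_sum,
        ← Finset.sum_sub_distrib]
      refine Finset.sum_congr rfl fun ι _ => ?_
      module
    rw [this, hsdef]
    simp only [z]
    module
  have hzb : ∀ j, ‖z j‖ ^ 2 ≤
      (1 - 2 * s * σ * α k + 2 * s ^ 2 * L ^ 2 * α k ^ 2) * ‖v k j - xstar‖ ^ 2
      + 4 * s * L * c * α k * M ^ 2 + 8 * s ^ 2 * L ^ 2 * c ^ 2 * α k ^ 2 * M ^ 2 := by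
    intro j
    refine srdo_local _ _ _ s σ L c (α k) M hs hL hc (hα k) ?_ ?_ ?_ (hyM j)
    · refine (norm_sum_le _ _).trans ?_
      rw [← hsum, Finset.sum_mul]
      refine Finset.sum_le_sum fun ι _ => ?_
      rw [norm_smul, Real.norm_eq_abs, abs_of_nonneg (hγ ι)]
      refine mul_le_mul_of_nonneg_left ?_ (hγ ι)
      simpa [hxstar] using hlip ι (v k j) xstar
    · refine (norm_sum_le _ _).trans ?_
      rw [← hsum, Finset.sum_mul]
      refine Finset.sum_le_sum fun ι _ => ?_
      rw [norm_smul, Real.norm_eq_abs, abs_of_nonneg (hγ ι)]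
      exact mul_le_mul_of_nonneg_left (hε k j ι) (hγ ι)
    · rw [← hsum, Finset.sum_mul, sum_inner]
      refine Finset.sum_le_sum fun ι _ => ?_
      rw [real_inner_smul_left]
      exact mul_le_mul_of_nonneg_left
        (srdo_strong_mono σ (f ι) (gf ι) (hconv ι) (hf ι) xstar (v k j) (hxstar ι)) (hγ ι)
  have hcons : ∑ l, ‖v (k + 1) l - xstar‖ ^ 2 ≤ ∑ j, ‖z j‖ ^ 2 := by
    calc ∑ l, ‖v (k + 1) l - xstar‖ ^ 2 ≤ ∑ l, ∑ j, W (k + 1) l j * ‖z j‖ ^ 2 := by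
          refine Finset.sum_le_sum fun l _ => ?_
          rw [hz l]
          exact srdo_jensen _ (hW (k + 1) l) (hWrow (k + 1) l) z
      _ = ∑ j, ‖z j‖ ^ 2 := by
          rw [Finset.sum_comm]
          refine Finset.sum_congr rfl fun j _ => ?_
          rw [← Finset.sum_mul, hWcol, one_mul]
  have hfin := hcons.trans (Finset.sum_le_sum fun j _ => hzb j)
  simp only [Finset.sum_add_distrib, ← Finset.mul_sum, Finset.sum_const, Finset.card_univ,
    Fintype.card_fin, nsmul_eq_mul] at hfin
  have hαk := hα k
  have q1 : 4 * s * n * L * c * α k * M ^ 2 ≤ 4 * s * n * L * c * α k * X :=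
    mul_le_mul_of_nonneg_left hMX (by positivity)
  have q2 : 8 * s ^ 2 * n * L ^ 2 * c ^ 2 * α k ^ 2 * M ^ 2
      ≤ 8 * s ^ 2 * n * L ^ 2 * c ^ 2 * α k ^ 2 * X :=
    mul_le_mul_of_nonneg_left hMX (by positivity)
  linarith
end

section
/- Let E be a real Hilbert space, p, n ∈ ℕ, and for each ι ∈ Fin p let f^ι : E → ℝ be convex and differentiable with L-Lipschitz gradient ∇f^ι (L ≥ 0). Let x* ∈ E, let x^ : Fin p → E satisfy ∇f^ι(x^ ι) = 0 for every ι, let I be a finite subset of Fin p, and assume x^ ι = x* for every ι ∉ I. Let γ₀ ≥ 0 and γ : Fin p → ℝ be nonnegative with γ₀ + Σ_ι γ ι = 1, set γ_max := max_ι γ ι and M := max_ι ‖x* − x^ ι‖. Let W : Fin n → Fin n → ℝ be doubly stochastic, α ≥ 0, v : Fin n → E, ε : Fin n → Fin p → E, and define x j := γ₀ • v j + Σ_ι γ ι • (v j − α • (∇f^ι (v j) − ε j ι)) and v' l := Σ_j W l j • x j. Then Σ_l ‖v' l − x*‖² ≤ Σ_j ‖v j − x*‖² + 2α Σ_j Σ_ι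 γ ι ⟨ε j ι, v j − x*⟩ + 2(1−γ₀) α² Σ_j Σ_ι γ ι ‖ε j ι‖² + 2 α n γ_max |I| L M² + 2 α γ_max |I| L Σ_j (max_ι ‖v j − x^ ι‖²) − 2α Σ_j Σ_ι γ ι (⟨∇f^ι(v j), v j − x^ ι⟩ − (1−γ₀) α ‖∇f^ι(v j)‖²). -/
open RealInnerProductSpace

/-- Maximum of a real-valued function over `Fin p` (for `0 < p`). -/
noncomputable def finMax {p : ℕ} (hp : 0 < p) (g : Fin p → ℝ) : ℝ :=
  Finset.univ.sup' (Finset.univ_nonempty_iff.mpr (Fin.pos_iff_nonempty.mp hp)) g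

theorem aux_jensen {E : Type*} [NormedAddCommGroup E] [InnerProductSpace ℝ E] {m : ℕ}
    (w : Fin m → ℝ) (hw : ∀ i, 0 ≤ w i) (d : Fin m → E) :
    ‖∑ i, w i • d i‖ ^ 2 ≤ (∑ i, w i) * ∑ i, w i * ‖d i‖ ^ 2 := by
  have h1 : ‖∑ i, w i • d i‖ ≤ ∑ i, w i * ‖d i‖ := by
    refine (norm_sum_le _ _).trans (le_of_eq ?_)
    refine Finset.sum_congr rfl fun i _ => ?_
    rw [norm_smul, Real.norm_of_nonneg (hw i)]
  calc ‖∑ i, w i • d i‖ ^ 2 ≤ (∑ i, w i * ‖d i‖) ^ 2 := by gcongr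
    _ ≤ _ := Finset.sum_sq_le_sum_mul_sum_of_sq_eq_mul _ (fun i _ => hw i)
        (fun i _ => mul_nonneg (hw i) (sq_nonneg _)) (fun i _ => by ring)

theorem aux_le_finMax {p : ℕ} (hp : 0 < p) (g : Fin p → ℝ) (i : Fin p) : g i ≤ finMax hp g :=
  Finset.le_sup' g (Finset.mem_univ i)

/-- SRDO per-iteration error bound in the general case (Lemma `type2_error_bound`,
deterministic form): `x^ ι` is a minimizer of the partition function `f^ι`, `I` is the set of
partitions whose minimum value is strictly below `f^ι(x*)`, and `x^ ι = x*` off `I`. -/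
theorem srdo_type2_error_bound
    {E : Type*} [NormedAddCommGroup E] [InnerProductSpace ℝ E] [CompleteSpace E]
    (p n : ℕ) (hp : 0 < p) (L : ℝ) (hL : 0 ≤ L)
    (f : Fin p → E → ℝ) (gf : Fin p → E → E)
    (hconv : ∀ ι, ConvexOn ℝ Set.univ (f ι))
    (hf : ∀ ι x, HasGradientAt (f ι) (gf ι x) x)
    (hlip : ∀ ι u w, ‖gf ι u - gf ι w‖ ≤ L * ‖u - w‖)
    (xstar : E) (xhat : Fin p → E) (hxhat : ∀ ι, gf ι (xhat ι) = 0)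
    (I : Finset (Fin p)) (hI : ∀ ι ∉ I, xhat ι = xstar)
    (γ₀ : ℝ) (γ : Fin p → ℝ) (hγ₀ : 0 ≤ γ₀) (hγ : ∀ ι, 0 ≤ γ ι)
    (hγsum : γ₀ + ∑ ι, γ ι = 1)
    (W : Fin n → Fin n → ℝ) (hW : ∀ i j, 0 ≤ W i j)
    (hWrow : ∀ i, ∑ j, W i j = 1) (hWcol : ∀ j, ∑ i, W i j = 1)
    (α : ℝ) (hα : 0 ≤ α) (v : Fin n → E) (ε : Fin n → Fin p → E)
    (x : Fin n → E)
    (hx : ∀ j, x j = γ₀ • v j + ∑ ι, γ ι • (v j - α • (gf ι (v j) - ε j ι)))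
    (v' : Fin n → E) (hv' : ∀ l, v' l = ∑ j, W l j • x j) :
    ∑ l, ‖v' l - xstar‖ ^ 2 ≤
      ∑ j, ‖v j - xstar‖ ^ 2
      + 2 * α * (∑ j, ∑ ι, γ ι * ⟪ε j ι, v j - xstar⟫)
      + 2 * (1 - γ₀) * α ^ 2 * (∑ j, ∑ ι, γ ι * ‖ε j ι‖ ^ 2)
      + 2 * α * n * finMax hp γ * I.card * L * (finMax hp fun ι => ‖xstar - xhat ι‖) ^ 2
      + 2 * α * finMax hp γ * I.card * L *
          (∑ j, finMax hp fun ι => ‖v j - xhat ι‖ ^ 2)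
      - 2 * α * (∑ j, ∑ ι, γ ι *
          (⟪gf ι (v j), v j - xhat ι⟫ - (1 - γ₀) * α * ‖gf ι (v j)‖ ^ 2)) := by
  have hS : ∑ ι, γ ι = 1 - γ₀ := by linarith
  have hS0 : 0 ≤ 1 - γ₀ := hS ▸ Finset.sum_nonneg fun ι _ => hγ ι
  -- consensus step
  have hcons : ∑ l, ‖v' l - xstar‖ ^ 2 ≤ ∑ j, ‖x j - xstar‖ ^ 2 := by
    have h1 : ∀ l, ‖v' l - xstar‖ ^ 2 ≤ ∑ j, W l j * ‖x j - xstar‖ ^ 2 := by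
      intro l
      have := aux_jensen (W l) (hW l) (fun j => x j - xstar)
      rw [hWrow, one_mul] at this
      convert this using 3
      simp only [smul_sub, Finset.sum_sub_distrib, ← Finset.sum_smul, hWrow, one_smul, hv']
    refine (Finset.sum_le_sum fun l _ => h1 l).trans (le_of_eq ?_)
    rw [Finset.sum_comm]
    refine Finset.sum_congr rfl fun j _ => ?_
    rw [← Finset.sum_mul, hWcol, one_mul]
  refine hcons.trans ?_
  set G := finMax hp γ with hG
  set M := finMax hp fun ι => ‖xstar - xhat ι‖ with hM
  have hG0 : 0 ≤ G := (hγ ⟨0, hp⟩).trans (aux_le_finMax hp γ _)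
  have key : ∀ j, ‖x j - xstar‖ ^ 2 ≤ ‖v j - xstar‖ ^ 2
      + 2 * α * (∑ ι, γ ι * ⟪ε j ι, v j - xstar⟫)
      + 2 * (1 - γ₀) * α ^ 2 * (∑ ι, γ ι * ‖ε j ι‖ ^ 2)
      + 2 * α * G * I.card * L * M ^ 2
      + 2 * α * G * I.card * L * (finMax hp fun ι => ‖v j - xhat ι‖ ^ 2)
      - 2 * α * (∑ ι, γ ι *
          (⟪gf ι (v j), v j - xhat ι⟫ - (1 - γ₀) * α * ‖gf ι (v j)‖ ^ 2)) := by
    intro j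
    set D := finMax hp fun ι => ‖v j - xhat ι‖ ^ 2 with hD
    have hxj : x j - xstar = (v j - xstar) - α • ∑ ι, γ ι • (gf ι (v j) - ε j ι) := by
      have h2 : ∑ ι, γ ι • (v j - α • (gf ι (v j) - ε j ι))
          = (1 - γ₀) • v j - α • ∑ ι, γ ι • (gf ι (v j) - ε j ι) := by
        rw [← hS, Finset.sum_smul, Finset.smul_sum, ← Finset.sum_sub_distrib]
        refine Finset.sum_congr rfl fun ι _ => ?_
        rw [smul_sub, smul_comm]
      rw [hx, h2]
      module
    have hJ := aux_jensen γ hγ (fun ι => gf ι (v j) - ε j ι)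
    rw [hS] at hJ
    have hd : ∑ ι, γ ι * ‖gf ι (v j) - ε j ι‖ ^ 2 ≤
        2 * ∑ ι, γ ι * ‖gf ι (v j)‖ ^ 2 + 2 * ∑ ι, γ ι * ‖ε j ι‖ ^ 2 := by
      rw [Finset.mul_sum, Finset.mul_sum, ← Finset.sum_add_distrib]
      refine Finset.sum_le_sum fun ι _ => ?_
      have h3 := parallelogram_law_with_norm ℝ (gf ι (v j)) (ε j ι)
      have h4 : ‖gf ι (v j) - ε j ι‖ ^ 2 ≤ 2 * ‖gf ι (v j)‖ ^ 2 + 2 * ‖ε j ι‖ ^ 2 := by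
        nlinarith [mul_self_nonneg ‖gf ι (v j) + ε j ι‖]
      nlinarith [mul_le_mul_of_nonneg_left h4 (hγ ι)]
    have hin : ⟪v j - xstar, ∑ ι, γ ι • (gf ι (v j) - ε j ι)⟫
        = ∑ ι, γ ι * ⟪gf ι (v j), v j - xstar⟫ - ∑ ι, γ ι * ⟪ε j ι, v j - xstar⟫ := by
      rw [inner_sum, ← Finset.sum_sub_distrib]
      refine Finset.sum_congr rfl fun ι _ => ?_
      rw [real_inner_smul_right, real_inner_comm, inner_sub_left]
      ring
    have hsplit : ∑ ι, γ ι * ⟪gf ι (v j), v j - xstar⟫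
        = ∑ ι, γ ι * ⟪gf ι (v j), v j - xhat ι⟫ - ∑ ι, γ ι * ⟪gf ι (v j), xstar - xhat ι⟫ := by
      rw [← Finset.sum_sub_distrib]
      refine Finset.sum_congr rfl fun ι _ => ?_
      rw [← mul_sub, ← inner_sub_right]
      congr 2
      abel
    have hcross : ∑ ι, γ ι * ⟪gf ι (v j), xstar - xhat ι⟫ ≤ I.card * (G * (L * (M ^ 2 + D))) := by
      rw [← Finset.sum_subset (Finset.subset_univ I)
        (fun ι _ h => by rw [hI ι h, sub_self, inner_zero_right, mul_zero]), ← nsmul_eq_mul]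
      refine Finset.sum_le_card_nsmul _ _ _ fun ι _ => ?_
      have a1 : ‖gf ι (v j)‖ ≤ L * ‖v j - xhat ι‖ := by
        have := hlip ι (v j) (xhat ι)
        rwa [hxhat, sub_zero] at this
      have a2 : ‖xstar - xhat ι‖ ≤ M := aux_le_finMax hp (fun ι => ‖xstar - xhat ι‖) ι
      have a3 : ‖v j - xhat ι‖ ^ 2 ≤ D := aux_le_finMax hp (fun ι => ‖v j - xhat ι‖ ^ 2) ι
      have a4 : ‖v j - xhat ι‖ * M ≤ M ^ 2 + D := by
        nlinarith [sq_nonneg (‖v j - xhat ι‖ - M), sq_nonneg M, sq_nonneg ‖v j - xhat ι‖]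
      have a5 : ⟪gf ι (v j), xstar - xhat ι⟫ ≤ L * (M ^ 2 + D) :=
        calc ⟪gf ι (v j), xstar - xhat ι⟫ ≤ ‖gf ι (v j)‖ * ‖xstar - xhat ι‖ :=
              real_inner_le_norm _ _
          _ ≤ (L * ‖v j - xhat ι‖) * M := by gcongr
          _ = L * (‖v j - xhat ι‖ * M) := by ring
          _ ≤ _ := by gcongr
      have a6 : 0 ≤ L * (M ^ 2 + D) :=
        mul_nonneg hL (add_nonneg (sq_nonneg _) ((sq_nonneg _).trans a3))
      calc _ ≤ γ ι * (L * (M ^ 2 + D)) := mul_le_mul_of_nonneg_left a5 (hγ ι)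
        _ ≤ _ := mul_le_mul_of_nonneg_right (aux_le_finMax hp γ ι) a6
    have hlast : ∑ ι, γ ι * (⟪gf ι (v j), v j - xhat ι⟫ - (1 - γ₀) * α * ‖gf ι (v j)‖ ^ 2)
        = ∑ ι, γ ι * ⟪gf ι (v j), v j - xhat ι⟫
          - (1 - γ₀) * α * ∑ ι, γ ι * ‖gf ι (v j)‖ ^ 2 := by
      rw [Finset.mul_sum, ← Finset.sum_sub_distrib]
      exact Finset.sum_congr rfl fun ι _ => by ring
    rw [hlast, hxj, norm_sub_sq_real, real_inner_smul_right, hin, hsplit, norm_smul, mul_pow,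
      Real.norm_eq_abs, sq_abs]
    have b1 := mul_le_mul_of_nonneg_left (hJ.trans (mul_le_mul_of_nonneg_left hd hS0)) (sq_nonneg α)
    have b2 := mul_le_mul_of_nonneg_left hcross (mul_nonneg zero_le_two hα)
    linarith
  refine (Finset.sum_le_sum fun j _ => key j).trans (le_of_eq ?_)
  simp only [Finset.sum_add_distrib, Finset.sum_sub_distrib, ← Finset.mul_sum, Finset.sum_const,
    Finset.card_univ, Fintype.card_fin, nsmul_eq_mul]
  ring
end

section
/- Let B ∈ ℕ and let a₁, a₂, ā₂ be real numbers with 0 ≤ a₁, 0 ≤ a₂ ≤ ā₂, and 0 < a₁ + ā₂ ≤ 1. Set ρ := (a₁ + ā₂)^(1/(B+1)). Then a₁ + a₂ · ρ^(−B) ≤ ρ. -/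
/-- Key elementary inequality of the martingale lemmas of the SRDO analysis:
with `ρ = (a₁ + ā₂)^(1/(B+1))`, one has `a₁ + a₂ ρ^(−B) ≤ ρ`. -/
theorem rho_contraction_inequality
    (B : ℕ) (a₁ a₂ a₂bar : ℝ)
    (ha₁ : 0 ≤ a₁) (ha₂ : 0 ≤ a₂) (hle : a₂ ≤ a₂bar)
    (hpos : 0 < a₁ + a₂bar) (hone : a₁ + a₂bar ≤ 1) :
    a₁ + a₂ * ((a₁ + a₂bar) ^ ((1 : ℝ) / (B + 1))) ^ (-(B : ℝ)) ≤
      (a₁ + a₂bar) ^ ((1 : ℝ) / (B + 1)) := by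
  have hB : (0 : ℝ) < (B : ℝ) + 1 := by positivity
  set ρ := (a₁ + a₂bar) ^ ((1 : ℝ) / (B + 1)) with hρ
  have h0 : 0 < ρ := Real.rpow_pos_of_pos hpos _
  have h1 : ρ ≤ 1 := Real.rpow_le_one hpos.le hone (by positivity)
  have hs : ρ ^ ((B : ℝ) + 1) = a₁ + a₂bar := by
    rw [hρ, ← Real.rpow_mul hpos.le, one_div, inv_mul_cancel₀ hB.ne', Real.rpow_one]
  have h2 : 1 ≤ ρ ^ (-(B : ℝ)) :=
    Real.one_le_rpow_of_pos_of_le_one_of_nonpos h0 h1 (by simp)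
  have h3 : (a₁ + a₂bar) * ρ ^ (-(B : ℝ)) = ρ := by
    rw [← hs, ← Real.rpow_add h0]
    have : (B : ℝ) + 1 + -(B : ℝ) = 1 := by ring
    rw [this, Real.rpow_one]
  nlinarith [mul_nonneg ha₁ (sub_nonneg.2 h2),
    mul_nonneg (sub_nonneg.2 hle) (zero_le_one.trans h2)]
end

section
/- Let E be a real normed vector space, n ∈ ℕ, μ ∈ [0,1], and let W : Fin n → Fin n → ℝ satisfy W i j ≥ 0 for all i, j, Σ_j W i j ≤ 1 for every i, and Σ_i W i j ≤ 1 − μ for every j. Then for every x : Fin n → E: Σ_i ‖Σ_j (W i j) • (x j)‖² ≤ (1 − μ) · Σ_j ‖x j‖². -/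
/-- Consensus-step contraction of the SRDO algorithm: for a nonnegative matrix with
substochastic rows and columns summing to at most `1 − μ`, the total squared norm after one
averaging step shrinks by the factor `1 − μ`. -/
theorem consensus_step_contraction
    {E : Type*} [NormedAddCommGroup E] [NormedSpace ℝ E]
    (n : ℕ) (μ : ℝ) (hμ₀ : 0 ≤ μ) (hμ₁ : μ ≤ 1)
    (W : Fin n → Fin n → ℝ) (hW : ∀ i j, 0 ≤ W i j)
    (hWrow : ∀ i, ∑ j, W i j ≤ 1) (hWcol : ∀ j, ∑ i, W i j ≤ 1 - μ) :
    ∀ x : Fin n → E,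
      ∑ i, ‖∑ j, W i j • x j‖ ^ 2 ≤ (1 - μ) * ∑ j, ‖x j‖ ^ 2 := by
  intro x
  have key : ∀ i, ‖∑ j, W i j • x j‖ ^ 2 ≤ ∑ j, W i j * ‖x j‖ ^ 2 := by
    intro i
    have h1 : ‖∑ j, W i j • x j‖ ≤ ∑ j, W i j * ‖x j‖ := by
      refine (norm_sum_le _ _).trans (le_of_eq ?_)
      refine Finset.sum_congr rfl fun j _ => ?_
      rw [norm_smul, Real.norm_of_nonneg (hW i j)]
    have h2 : (∑ j, W i j * ‖x j‖) ^ 2 ≤ (∑ j, W i j) * ∑ j, W i j * ‖x j‖ ^ 2 := by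
      refine Finset.sum_sq_le_sum_mul_sum_of_sq_eq_mul _ (fun j _ => hW i j)
        (fun j _ => mul_nonneg (hW i j) (sq_nonneg _)) (fun j _ => ?_)
      ring
    have h3 : 0 ≤ ∑ j, W i j * ‖x j‖ ^ 2 :=
      Finset.sum_nonneg fun j _ => mul_nonneg (hW i j) (sq_nonneg _)
    calc ‖∑ j, W i j • x j‖ ^ 2 ≤ (∑ j, W i j * ‖x j‖) ^ 2 :=
          pow_le_pow_left₀ (norm_nonneg _) h1 2
      _ ≤ _ := h2
      _ ≤ _ := mul_le_of_le_one_left h3 (hWrow i)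
  calc ∑ i, ‖∑ j, W i j • x j‖ ^ 2 ≤ ∑ i, ∑ j, W i j * ‖x j‖ ^ 2 :=
        Finset.sum_le_sum fun i _ => key i
    _ = ∑ j, (∑ i, W i j) * ‖x j‖ ^ 2 := by
        rw [Finset.sum_comm]
        exact Finset.sum_congr rfl fun j _ => (Finset.sum_mul _ _ _).symm
    _ ≤ ∑ j, (1 - μ) * ‖x j‖ ^ 2 :=
        Finset.sum_le_sum fun j _ => mul_le_mul_of_nonneg_right (hWcol j) (sq_nonneg _)
    _ = _ := (Finset.mul_sum _ _ _).symm
end
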